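/- arXiv:2011.05709 — 4 statements merged into one kernel-verified Lean document; each statement's English description precedes it below -/
import Mathlib

section
/- Let c > 0, q ∈ (1/2, 1), β > 0 and a ∈ ℂ. Let F : ℝ → ℂ be bounded and measurable with lim_{k→−∞} (−k)^β F(k) = a. Then lim_{n→∞} n^β · (2cn)^{−1/2} ∫_{−n−n^q}^{−n+n^q} F(k) e^{−(k+n)²/(4cn)} dk = √(2π) · a. -/
open MeasureTheory Filter Topology

lemma gwl_w (c q : ℝ) (hc : 0 < c) (hq : q ∈ Set.Ioo (1/2 : ℝ) 1) :
    Tendsto (fun n : ℕ => (n:ℝ)^q / Real.sqrt (2*c*(n:ℝ))) atTop atTop := by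
  have h1 : Tendsto (fun n : ℕ => (n:ℝ)^(q-1/2) / Real.sqrt (2*c)) atTop atTop :=
    ((tendsto_rpow_atTop (by linarith [hq.1])).comp tendsto_natCast_atTop_atTop).atTop_div_const
      (by positivity)
  refine h1.congr' ?_
  filter_upwards [eventually_gt_atTop 0] with n hn
  have hn' : (0:ℝ) < n := by exact_mod_cast hn
  rw [Real.rpow_sub hn', ← Real.sqrt_eq_rpow, Real.sqrt_mul (x := 2*c) (by positivity) (n:ℝ)]
  field_simp

lemma gwl_s (c : ℝ) (hc : 0 < c) :
    Tendsto (fun n : ℕ => Real.sqrt (2*c*(n:ℝ)) / n) atTop (𝓝 0) := by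
  have h1 : Tendsto (fun n : ℕ => Real.sqrt (2*c) / Real.sqrt (n:ℝ)) atTop (𝓝 0) :=
    tendsto_const_nhds.div_atTop (Real.tendsto_sqrt_atTop.comp tendsto_natCast_atTop_atTop)
  refine h1.congr' ?_
  filter_upwards [eventually_gt_atTop 0] with n hn
  have hn' : (0:ℝ) < n := by exact_mod_cast hn
  rw [Real.sqrt_mul (x := 2*c) (by positivity) (n:ℝ)]
  have := Real.mul_self_sqrt hn'.le
  have h0 : 0 < Real.sqrt (n:ℝ) := by positivity
  rw [div_eq_div_iff h0.ne' hn'.ne', mul_assoc, this]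

lemma gwl_half (q : ℝ) (hq : q ∈ Set.Ioo (1/2 : ℝ) 1) :
    ∀ᶠ n : ℕ in atTop, (n:ℝ)^q ≤ n / 2 := by
  have h1 : Tendsto (fun n : ℕ => (n:ℝ)^(1-q)) atTop atTop :=
    (tendsto_rpow_atTop (by linarith [hq.2])).comp tendsto_natCast_atTop_atTop
  filter_upwards [eventually_gt_atTop 0, h1.eventually_ge_atTop 2] with n hn h2
  have hn' : (0:ℝ) < n := by exact_mod_cast hn
  rw [Real.rpow_sub hn', Real.rpow_one, le_div_iff₀ (by positivity)] at h2
  linarith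

theorem gaussian_window_limit
    (c q β : ℝ) (hc : 0 < c) (hq : q ∈ Set.Ioo (1/2 : ℝ) 1) (hβ : 0 < β)
    (a : ℂ) (F : ℝ → ℂ) (hFmeas : Measurable F)
    (M : ℝ) (hFbdd : ∀ k : ℝ, ‖F k‖ ≤ M)
    (hlim : Tendsto (fun k : ℝ => (((-k) ^ β : ℝ) : ℂ) * F k) atBot (𝓝 a)) :
    Tendsto (fun n : ℕ => (((n:ℝ) ^ β : ℝ) : ℂ) *
        ((Real.sqrt (2*c*(n:ℝ)) : ℂ)⁻¹ *
          ∫ k in (-(n:ℝ) - (n:ℝ)^q)..(-(n:ℝ) + (n:ℝ)^q),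
            F k * Complex.exp (-((k:ℂ) + (n:ℂ))^2 / (4*c*(n:ℝ)))))
      atTop (𝓝 ((Real.sqrt (2*Real.pi) : ℂ) * a)) := by
  set s : ℕ → ℝ := fun n => Real.sqrt (2*c*(n:ℝ)) with hs
  set w : ℕ → ℝ := fun n => (n:ℝ)^q / s n with hw
  have hwlim : Tendsto w atTop atTop := gwl_w c q hc hq
  have hslim : Tendsto (fun n : ℕ => s n / n) atTop (𝓝 0) := gwl_s c hc
  let G : ℕ → ℝ → ℂ := fun n => (Set.Ioc (-(w n)) (w n)).indicator (fun x =>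
    (((n:ℝ) ^ β : ℝ) : ℂ) * (F (-(n:ℝ) + s n * x) * ((Real.exp (-(1/2) * x^2) : ℝ) : ℂ)))
  have key : Tendsto (fun n => ∫ x, G n x) atTop
      (𝓝 (∫ x : ℝ, a * ((Real.exp (-(1/2) * x^2) : ℝ) : ℂ))) := by
    have hb := hlim.norm.eventually_le_const (lt_add_one ‖a‖)
    obtain ⟨K, hK⟩ := eventually_atBot.1 hb
    refine tendsto_integral_filter_of_dominated_convergence
      (fun x => 2^β * (‖a‖ + 1) * Real.exp (-(1/2) * x^2)) ?_ ?_ ?_ ?_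
    · refine Eventually.of_forall fun n => Measurable.aestronglyMeasurable ?_
      refine Measurable.indicator ?_ measurableSet_Ioc
      have : Measurable (fun x : ℝ => F (-(n:ℝ) + s n * x)) :=
        hFmeas.comp (by fun_prop)
      fun_prop
    · have hKn : ∀ᶠ n : ℕ in atTop, -(2*K) ≤ (n:ℝ) :=
        tendsto_natCast_atTop_atTop.eventually_ge_atTop _
      filter_upwards [gwl_half q hq, eventually_gt_atTop 0, hKn] with n h1 hn h2
      refine Eventually.of_forall fun x => ?_
      have hn' : (0:ℝ) < n := by exact_mod_cast hn
      have hs0 : 0 < s n := by simp only [hs]; positivity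
      by_cases hx : x ∈ Set.Ioc (-(w n)) (w n)
      · simp only [G, Set.indicator_of_mem hx]
        have hsx : s n * x ≤ n / 2 := by
          have := mul_le_mul_of_nonneg_left hx.2 hs0.le
          have h3 : s n * w n = (n:ℝ)^q := by simp only [hw]; field_simp
          linarith
        have hk : -(n:ℝ) + s n * x ≤ K := by linarith
        have hB := hK _ hk
        set k := -(n:ℝ) + s n * x with hkdef
        have hkn : (n:ℝ) ≤ 2 * (-k) := by linarith
        have hkpos : 0 < -k := by linarith
        have hpow : (n:ℝ)^β ≤ 2^β * (-k)^β := by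
          rw [← Real.mul_rpow (by norm_num) hkpos.le]
          exact Real.rpow_le_rpow hn'.le hkn hβ.le
        rw [norm_mul, Complex.norm_real, Real.norm_of_nonneg (by positivity)] at hB
        rw [norm_mul, norm_mul, Complex.norm_real, Complex.norm_real,
          Real.norm_of_nonneg (by positivity), Real.norm_of_nonneg (by positivity), ← mul_assoc]
        refine mul_le_mul_of_nonneg_right ?_ (by positivity)
        calc (n:ℝ)^β * ‖F k‖ ≤ (2^β * (-k)^β) * ‖F k‖ := by gcongr
          _ = 2^β * ((-k)^β * ‖F k‖) := by ring
          _ ≤ _ := by gcongr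
      · simp only [G, Set.indicator_of_notMem hx, norm_zero]
        positivity
    · exact (integrable_exp_neg_mul_sq (by norm_num)).const_mul _
    · refine Eventually.of_forall fun x => ?_
      have hr : Tendsto (fun n : ℕ => 1 - s n / n * x) atTop (𝓝 1) := by
        simpa using (hslim.mul_const x).const_sub 1
      have ht : Tendsto (fun n : ℕ => (n:ℝ) * (1 - s n / n * x)) atTop atTop :=
        tendsto_natCast_atTop_atTop.atTop_mul_pos one_pos hr
      have ht' : Tendsto (fun n : ℕ => -((n:ℝ) * (1 - s n / n * x))) atTop atBot :=
        tendsto_neg_atTop_atBot.comp ht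
      have h1 := hlim.comp ht'
      have h2 : Tendsto (fun n : ℕ => (((1 - s n / n * x) ^ (-β) : ℝ) : ℂ)) atTop (𝓝 1) := by
        have := hr.rpow_const (p := -β) (Or.inl one_ne_zero)
        rw [Real.one_rpow] at this
        exact_mod_cast (Complex.continuous_ofReal.tendsto 1).comp this
      have h3 := (h2.mul h1).mul_const ((Real.exp (-(1/2) * x^2) : ℝ) : ℂ)
      rw [one_mul] at h3
      refine h3.congr' ?_
      filter_upwards [hwlim.eventually_gt_atTop |x|, eventually_gt_atTop 0,
        hr.eventually_const_lt one_pos] with n hn1 hn hr0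
      have hn' : (0:ℝ) < n := by exact_mod_cast hn
      have hx : x ∈ Set.Ioc (-(w n)) (w n) :=
        ⟨(abs_lt.1 hn1).1, (abs_lt.1 hn1).2.le⟩
      simp only [G, Set.indicator_of_mem hx, Function.comp_apply, neg_neg]
      have e1 : -((n:ℝ) * (1 - s n / n * x)) = -(n:ℝ) + s n * x := by field_simp; ring
      rw [e1, ← mul_assoc, ← mul_assoc, ← Complex.ofReal_mul]
      congr 3
      rw [Real.mul_rpow hn'.le hr0.le, mul_left_comm, ← Real.rpow_add hr0]
      simp
  have hval : (∫ x : ℝ, a * ((Real.exp (-(1/2) * x^2) : ℝ) : ℂ))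
      = (Real.sqrt (2*Real.pi) : ℂ) * a := by
    rw [integral_const_mul, integral_complex_ofReal, integral_gaussian, mul_comm]
    congr 3
    ring
  rw [hval] at key
  refine key.congr' ?_
  filter_upwards [eventually_gt_atTop 0] with n hn
  have hn' : (0:ℝ) < n := by exact_mod_cast hn
  have hs0 : 0 < s n := by simp only [hs]; positivity
  have hw0 : 0 ≤ w n := by simp only [hw]; positivity
  have h3 : s n * w n = (n:ℝ)^q := by simp only [hw]; field_simp
  have hs2 : s n ^ 2 = 2*c*n := Real.sq_sqrt (by positivity)
  have hsub := intervalIntegral.smul_integral_comp_add_mul (a := -(w n)) (b := w n)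
    (fun k : ℝ => F k * Complex.exp (-((k:ℂ) + (n:ℂ))^2 / (4*c*(n:ℝ)))) (s n) (-(n:ℝ))
  rw [mul_neg, h3, ← sub_eq_add_neg] at hsub
  rw [← hsub, Complex.real_smul, inv_mul_cancel_left₀ (by exact_mod_cast hs0.ne')]
  simp only [G]
  rw [integral_indicator measurableSet_Ioc, integral_const_mul,
    ← intervalIntegral.integral_of_le (by linarith)]
  congr 1
  refine intervalIntegral.integral_congr fun x _ => ?_
  rw [Complex.ofReal_exp]
  congr 2
  have hs2' : (s n : ℂ)^2 = 2*c*n := by exact_mod_cast hs2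
  have hnC : (n:ℂ) ≠ 0 := by exact_mod_cast hn.ne'
  have hcC : (c:ℂ) ≠ 0 := by exact_mod_cast hc.ne'
  push_cast
  rw [neg_add_cancel_comm, mul_pow, hs2']
  field_simp
  ring
end

section
/- Let f be analytic on the open unit disc 𝔻 ⊂ ℂ with Maclaurin series f(p) = ∑_{k≥0} c_k p^k. Then Af is analytic on 𝔻 and (Af)(p) = √π ∑_{k≥0} (Γ(k+1)/Γ(k+1/2)) c_k p^k for all p ∈ 𝔻, the series on the right converging for all p ∈ 𝔻. -/
open MeasureTheory Filter Topology

/-- `G_f(p) = ∫_0^1 f(pt)(1−t)^{−1/2} dt`. -/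
noncomputable def Gop (f : ℂ → ℂ) (p : ℂ) : ℂ :=
  ∫ t in (0:ℝ)..1, f (p * (t:ℂ)) * (((1 - t) ^ (-(1/2) : ℝ) : ℝ) : ℂ)

/-- `(Af)(p) = G_f(p)/2 + p·G_f'(p)`, realizing `√p (d/dp)[p^{−1/2} * f](p)`. -/
noncomputable def Aop (f : ℂ → ℂ) (p : ℂ) : ℂ :=
  Gop f p / 2 + p * deriv (Gop f) p

theorem hs_congr {u v : ℕ → ℂ} {x : ℂ} (h : ∀ k, u k = v k) (hv : HasSum v x) : HasSum u x := by
  rw [funext h]; exact hv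

theorem ps_aux (g : ℂ → ℂ) (a : ℕ → ℂ)
    (hg : ∀ p ∈ Metric.ball (0:ℂ) 1, HasSum (fun k : ℕ => a k * p ^ k) (g p)) :
    AnalyticOnNhd ℂ g (Metric.ball (0:ℂ) 1) ∧
    ∀ p ∈ Metric.ball (0:ℂ) 1, HasSum (fun k : ℕ => (k:ℂ) * a k * p ^ k) (p * deriv g p) := by
  have key : ∀ p ∈ Metric.ball (0:ℂ) 1, DifferentiableAt ℂ g p ∧
      HasSum (fun k : ℕ => (k:ℂ) * a k * p ^ k) (p * deriv g p) := by
    intro p hp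
    have hp1 : ‖p‖ < 1 := by simpa using hp
    obtain ⟨r, hpr, hr1⟩ := exists_between hp1
    have hr0 : 0 < r := lt_of_le_of_lt (norm_nonneg p) hpr
    have hrs : Summable (fun k : ℕ => ‖a k‖ * r ^ k) := by
      have h := (hg (r:ℂ) (by simp [abs_of_pos hr0, hr1])).summable.norm
      simpa [abs_of_pos hr0] using h
    have hd : ∀ k : ℕ, DifferentiableOn ℂ (fun w : ℂ => a k * w ^ k) (Metric.ball 0 r) := by
      intro k; fun_prop
    have hle : ∀ (k : ℕ) (w : ℂ), w ∈ Metric.ball (0:ℂ) r → ‖a k * w ^ k‖ ≤ ‖a k‖ * r ^ k := by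
      intro k w hw
      have hw : ‖w‖ < r := by simpa using hw
      rw [norm_mul, norm_pow]
      gcongr
    have hpm : p ∈ Metric.ball (0:ℂ) r := by simpa using hpr
    have hnh : Metric.ball (0:ℂ) r ∈ 𝓝 p := Metric.isOpen_ball.mem_nhds hpm
    have heq : (fun w => ∑' k, a k * w ^ k) =ᶠ[𝓝 p] g := by
      filter_upwards [hnh] with w hw
      exact (hg w (Metric.ball_subset_ball hr1.le hw)).tsum_eq
    have h1 := Complex.differentiableOn_tsum_of_summable_norm hrs hd Metric.isOpen_ball hle
    have h2 := Complex.hasSum_deriv_of_summable_norm hrs hd Metric.isOpen_ball hle hpm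
    refine ⟨(h1.differentiableAt hnh).congr_of_eventuallyEq heq.symm, ?_⟩
    rw [heq.deriv_eq] at h2
    refine hs_congr (fun k => ?_) (h2.mul_left p)
    rw [deriv_const_mul _ (by fun_prop)]
    rcases k with _ | k
    · simp
    · rw [deriv_pow_field, Nat.add_sub_cancel, pow_succ]; ring
  refine ⟨?_, fun p hp => (key p hp).2⟩
  exact DifferentiableOn.analyticOnNhd (fun p hp => (key p hp).1.differentiableWithinAt)
    Metric.isOpen_ball

theorem wt_int : IntervalIntegrable (fun t : ℝ => (1 - t) ^ (-(1/2) : ℝ)) volume 0 1 := by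
  have h := (intervalIntegral.intervalIntegrable_rpow' (a := 0) (b := 1) (r := -(1/2))
    (by norm_num)).comp_sub_left 1
  simpa using h.symm

theorem beta_val (k : ℕ) :
    (1/2 + (k:ℂ)) * (∫ t in (0:ℝ)..1, (t:ℂ) ^ k * (((1 - t) ^ (-(1/2) : ℝ) : ℝ) : ℂ)) =
    (Real.sqrt Real.pi : ℂ) * ((Real.Gamma ((k:ℝ)+1) / Real.Gamma ((k:ℝ)+1/2) : ℝ) : ℂ) := by
  have h1 : (∫ t in (0:ℝ)..1, (t:ℂ) ^ k * (((1 - t) ^ (-(1/2) : ℝ) : ℝ) : ℂ)) =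
      Complex.betaIntegral (k + 1) (1/2) := by
    rw [Complex.betaIntegral]
    apply intervalIntegral.integral_congr
    intro t ht
    rw [Set.uIcc_of_le zero_le_one] at ht
    have : (((1 - t) ^ (-(1/2) : ℝ) : ℝ) : ℂ) = (1 - (t:ℂ)) ^ ((1/2 : ℂ) - 1) := by
      rw [Complex.ofReal_cpow (by linarith [ht.2])]
      push_cast
      norm_num
    simp only [this]
    simp
  have hpos : (0:ℝ) < (k:ℝ) + 1/2 := by positivity
  have h2 := Complex.Gamma_mul_Gamma_eq_betaIntegral (s := (k:ℂ) + 1) (t := 1/2)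
    (by simp; positivity) (by norm_num)
  have e1 : Complex.Gamma ((k:ℂ) + 1) = (Real.Gamma ((k:ℝ)+1) : ℂ) := by
    rw [← Complex.Gamma_ofReal]; push_cast; rfl
  have e2 : Complex.Gamma (1/2) = (Real.sqrt Real.pi : ℂ) := by
    rw [← Real.Gamma_one_half_eq, ← Complex.Gamma_ofReal]; push_cast; rfl
  have e3 : Complex.Gamma ((k:ℂ) + 1 + 1/2) =
      ((k:ℂ) + 1/2) * (Real.Gamma ((k:ℝ)+1/2) : ℂ) := by
    rw [← Complex.Gamma_ofReal]
    have : (k:ℂ) + 1 + 1/2 = ((((k:ℝ) + 1/2 : ℝ)) : ℂ) + 1 := by push_cast; ring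
    rw [this, Complex.Gamma_add_one _ (by exact_mod_cast hpos.ne')]
    push_cast; rfl
  rw [e1, e2, e3] at h2
  have hG : (Real.Gamma ((k:ℝ)+1/2) : ℂ) ≠ 0 := by
    exact_mod_cast (Real.Gamma_pos_of_pos hpos).ne'
  rw [h1, Complex.ofReal_div, mul_div_assoc', eq_div_iff hG]
  linear_combination -h2

theorem Gop_hasSum (f : ℂ → ℂ) (c : ℕ → ℂ)
    (hf : ∀ p ∈ Metric.ball (0:ℂ) 1, HasSum (fun k : ℕ => c k * p ^ k) (f p)) :
    ∀ p ∈ Metric.ball (0:ℂ) 1, HasSum (fun k : ℕ =>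
      (c k * ∫ t in (0:ℝ)..1, (t:ℂ) ^ k * (((1 - t) ^ (-(1/2) : ℝ) : ℝ) : ℂ)) * p ^ k)
      (Gop f p) := by
  intro p hp
  have hs : Summable (fun k : ℕ => ‖c k‖ * ‖p‖ ^ k) := by
    simpa using (hf p hp).summable.norm
  have hp1 : ‖p‖ < 1 := by simpa using hp
  have hw : Measurable (fun t : ℝ => (((1 - t) ^ (-(1/2) : ℝ) : ℝ) : ℂ)) := by fun_prop
  have h := intervalIntegral.hasSum_integral_of_dominated_convergence (μ := volume)
    (a := 0) (b := 1)
    (F := fun (k : ℕ) (t : ℝ) => c k * (p * (t:ℂ)) ^ k * (((1 - t) ^ (-(1/2) : ℝ) : ℝ) : ℂ))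
    (f := fun t : ℝ => f (p * (t:ℂ)) * (((1 - t) ^ (-(1/2) : ℝ) : ℝ) : ℂ))
    (fun k t => ‖c k‖ * ‖p‖ ^ k * (1 - t) ^ (-(1/2) : ℝ))
    (fun k => by
      apply Measurable.aestronglyMeasurable
      fun_prop)
    (fun k => by
      refine Eventually.of_forall fun t ht => ?_
      rw [Set.uIoc_of_le zero_le_one] at ht
      have h0 : 0 ≤ (1 - t) ^ (-(1/2) : ℝ) := Real.rpow_nonneg (by linarith [ht.2]) _
      rw [norm_mul, norm_mul, norm_pow, norm_mul, Complex.norm_real, Complex.norm_real,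
        Real.norm_of_nonneg h0, Real.norm_of_nonneg ht.1.le]
      have h3 : 0 ≤ ‖p‖ * t := mul_nonneg (norm_nonneg p) ht.1.le
      have h4 : ‖p‖ * t ≤ ‖p‖ := mul_le_of_le_one_right (norm_nonneg p) ht.2
      gcongr)
    (Eventually.of_forall fun t ht => hs.mul_right _)
    (by
      simp_rw [tsum_mul_right]
      exact wt_int.const_mul _)
    (Eventually.of_forall fun t ht => by
      rw [Set.uIoc_of_le zero_le_one] at ht
      apply HasSum.mul_right
      apply hf
      simp only [Metric.mem_ball, dist_zero_right, norm_mul, Complex.norm_real,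
        Real.norm_of_nonneg ht.1.le]
      nlinarith [norm_nonneg p, ht.2, ht.1])
  rw [Gop]
  refine hs_congr (fun k => ?_) h
  rw [← intervalIntegral.integral_const_mul, ← intervalIntegral.integral_mul_const]
  congr 1
  ext t
  ring

/-- if `f(p) = ∑ c_k p^k` on the unit disc, then `Af` is analytic on the disc
and `(Af)(p) = √π ∑ (Γ(k+1)/Γ(k+1/2)) c_k p^k` there, the series converging on the disc. -/
theorem Aop_of_power_series
    (f : ℂ → ℂ) (c : ℕ → ℂ)
    (hfan : AnalyticOnNhd ℂ f (Metric.ball (0:ℂ) 1))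
    (hf : ∀ p ∈ Metric.ball (0:ℂ) 1, HasSum (fun k : ℕ => c k * p ^ k) (f p)) :
    AnalyticOnNhd ℂ (Aop f) (Metric.ball (0:ℂ) 1) ∧
    ∀ p ∈ Metric.ball (0:ℂ) 1,
      HasSum (fun k : ℕ => (Real.sqrt Real.pi : ℂ) *
        ((Real.Gamma ((k:ℝ)+1) / Real.Gamma ((k:ℝ)+1/2) : ℝ) : ℂ) * c k * p ^ k)
        (Aop f p) := by
  have hG := Gop_hasSum f c hf
  have hG2 := (ps_aux _ _ hG).2
  have main : ∀ p ∈ Metric.ball (0:ℂ) 1,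
      HasSum (fun k : ℕ => (Real.sqrt Real.pi : ℂ) *
        ((Real.Gamma ((k:ℝ)+1) / Real.Gamma ((k:ℝ)+1/2) : ℝ) : ℂ) * c k * p ^ k)
        (Aop f p) := by
    intro p hp
    have h := ((hG p hp).div_const 2).add (hG2 p hp)
    rw [Aop]
    refine hs_congr (fun k => ?_) h
    rw [← beta_val]
    ring
  exact ⟨(ps_aux _ _ main).1, main⟩
end

section
/- Let Ω := ℂ ∖ ((−∞,−1] ∪ [1,∞)), let μ : [−1,1] → ℝ be bounded and measurable, and define Q(p) := ∫_{−1}^1 μ(x)(1 − px)^{−1/2} dx for p ∈ Ω (principal branch). Then Q is analytic on Ω, AQ is analytic on Ω, and (AQ)(p) = ∫_{−1}^1 μ(x)(1 − px)^{−1} dx for every p ∈ Ω. -/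
open MeasureTheory Filter Topology

/-- `Ω = ℂ ∖ ((−∞,−1] ∪ [1,∞))`. -/
def Omega : Set ℂ :=
  (Complex.ofReal '' (Set.Iic (-1) ∪ Set.Ici 1))ᶜ

lemma aux_slit {p : ℂ} (hp : p ∈ Omega) {s : ℝ} (hs : s ∈ Set.Icc (-1:ℝ) 1) :
    (1:ℂ) - p * (s:ℂ) ∈ Complex.slitPlane := by
  rw [Complex.mem_slitPlane_iff]
  by_contra hcon
  push Not at hcon
  obtain ⟨h1, h2⟩ := hcon
  simp at h1 h2
  obtain ⟨hs1, hs2⟩ := hs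
  have hs0 : s ≠ 0 := by
    rintro rfl
    simp at h1
    linarith
  have him : p.im = 0 := by
    rcases h2 with h | h
    · exact h
    · exact absurd h hs0
  apply hp
  refine ⟨p.re, ?_, ?_⟩
  · by_contra hc
    simp only [Set.mem_union, Set.mem_Iic, Set.mem_Ici, not_or, not_le] at hc
    rcases lt_or_gt_of_ne hs0 with h | h <;> nlinarith [hc.1, hc.2]
  · apply Complex.ext <;> simp [him]

lemma aux_open : IsOpen Omega := by
  unfold Omega
  rw [isOpen_compl_iff]
  exact Complex.isometry_ofReal.isClosedEmbedding.isClosedMap _ (isClosed_Iic.union isClosed_Ici)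

lemma aux_mul {p : ℂ} (hp : p ∈ Omega) {t : ℝ} (ht : t ∈ Set.Icc (0:ℝ) 1) :
    p * (t:ℂ) ∈ Omega := by
  rintro ⟨r, hr, hrp⟩
  obtain ⟨ht0, ht1⟩ := ht
  have key : ∀ s ∈ Set.Icc (-1:ℝ) 1, (1:ℂ) - p * ((t * s : ℝ) : ℂ) ∈ Complex.slitPlane := by
    intro s hs
    apply aux_slit hp
    constructor <;> nlinarith [hs.1, hs.2]
  have hr0 : r ≠ 0 := by
    rintro rfl
    rcases hr with h | h
    · simp at h; linarith
    · simp at h; linarith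
  have h := key r⁻¹ (by
    rcases hr with h | h
    · have h : r ≤ -1 := h
      constructor
      · rw [← neg_le_neg_iff, ← inv_neg, neg_neg]; exact inv_le_one_of_one_le₀ (by linarith)
      · have : r⁻¹ < 0 := inv_lt_zero.2 (by linarith)
        linarith
    · have h : 1 ≤ r := h
      constructor
      · have : 0 < r⁻¹ := inv_pos.2 (by linarith)
        linarith
      · exact inv_le_one_of_one_le₀ h)
  have h2 : (1:ℂ) - p * ((t * r⁻¹ : ℝ) : ℂ) = 0 := by
    have : (r:ℂ) ≠ 0 := by exact_mod_cast hr0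
    push_cast
    rw [← mul_assoc, ← hrp, mul_inv_cancel₀ this, sub_self]
  rw [h2] at h
  exact Complex.zero_notMem_slitPlane h

lemma aux_bound {p : ℂ} (hp : p ∈ Omega) (a : ℂ) :
    ∃ ε > 0, ∃ C, Metric.closedBall p ε ⊆ Omega ∧ ∀ q ∈ Metric.closedBall p ε,
      ∀ s ∈ Set.Icc (-1:ℝ) 1, ‖((1:ℂ) - q * (s:ℂ)) ^ a‖ ≤ C := by
  obtain ⟨ε, hε, hb⟩ := Metric.nhds_basis_closedBall.mem_iff.1 (aux_open.mem_nhds hp)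
  have hc : ContinuousOn (fun y : ℂ × ℝ => ((1:ℂ) - y.1 * (y.2:ℂ)) ^ a)
      (Metric.closedBall p ε ×ˢ Set.Icc (-1:ℝ) 1) := by
    apply ContinuousOn.cpow_const
    · fun_prop
    · intro y hy
      exact aux_slit (hb hy.1) hy.2
  obtain ⟨C, hC⟩ := ((isCompact_closedBall p ε).prod isCompact_Icc).exists_bound_of_continuousOn hc
  exact ⟨ε, hε, C, hb, fun q hq s hs => hC (q, s) ⟨hq, hs⟩⟩

lemma aux_int {Y : Type*} [MeasurableSpace Y] (ν : Measure Y) (m : Y → ℂ) (hm : Integrable m ν)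
    (s : Y → ℝ) (hs : Measurable s) (hs1 : ∀ᵐ y ∂ν, s y ∈ Set.Icc (-1:ℝ) 1) (a : ℂ)
    {p : ℂ} (hp : p ∈ Omega) :
    Integrable (fun y => m y * ((1:ℂ) - p * (s y : ℂ)) ^ a) ν := by
  obtain ⟨ε, hε, C, hb, hC⟩ := aux_bound hp a
  refine hm.mul_bdd (c := C) ?_ ?_
  · exact Measurable.aestronglyMeasurable (by fun_prop)
  · filter_upwards [hs1] with y hy
    exact hC p (Metric.mem_closedBall_self hε.le) _ hy

lemma aux_deriv {Y : Type*} [MeasurableSpace Y] (ν : Measure Y) (m : Y → ℂ) (hm : Integrable m ν)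
    (s : Y → ℝ) (hs : Measurable s) (hs1 : ∀ᵐ y ∂ν, s y ∈ Set.Icc (-1:ℝ) 1) (a : ℂ)
    {p : ℂ} (hp : p ∈ Omega) :
    HasDerivAt (fun q => ∫ y, m y * ((1:ℂ) - q * (s y : ℂ)) ^ a ∂ν)
      (∫ y, m y * (a * ((1:ℂ) - p * (s y : ℂ)) ^ (a - 1) * (-(s y : ℂ))) ∂ν) p := by
  obtain ⟨ε, hε, C, hb, hC⟩ := aux_bound hp (a - 1)
  refine (hasDerivAt_integral_of_dominated_loc_of_deriv_le
    (F := fun q y => m y * ((1:ℂ) - q * (s y : ℂ)) ^ a)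
    (F' := fun q y => m y * (a * ((1:ℂ) - q * (s y : ℂ)) ^ (a - 1) * (-(s y : ℂ))))
    (bound := fun y => ‖m y‖ * (‖a‖ * C))
    (Metric.closedBall_mem_nhds p hε) ?_ ?_ ?_ ?_ ?_ ?_).2
  · filter_upwards [aux_open.mem_nhds hp] with q hq
    exact (aux_int ν m hm s hs hs1 a hq).aestronglyMeasurable
  · exact aux_int ν m hm s hs hs1 a hp
  · exact hm.aestronglyMeasurable.mul (Measurable.aestronglyMeasurable (by fun_prop))
  · filter_upwards [hs1] with y hy q hq
    rw [norm_mul, norm_mul, norm_mul, norm_neg, Complex.norm_real]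
    have h1 := hC q hq _ hy
    have h2 : ‖s y‖ ≤ 1 := abs_le.2 hy
    have h0 : 0 ≤ C := (norm_nonneg _).trans h1
    have : ‖a‖ * ‖((1:ℂ) - q * (s y : ℂ)) ^ (a - 1)‖ * ‖s y‖ ≤ ‖a‖ * C * 1 := by gcongr
    rw [mul_one] at this
    gcongr
  · exact hm.norm.mul_const _
  · filter_upwards [hs1] with y hy q hq
    apply HasDerivAt.const_mul
    have h : HasDerivAt (fun q : ℂ => (1:ℂ) - q * (s y : ℂ)) (-(s y : ℂ)) q := by
      simpa using ((hasDerivAt_id q).mul_const (s y : ℂ)).const_sub 1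
    exact h.cpow_const (aux_slit (hb hq) hy)

lemma aux_w : IntervalIntegrable (fun t : ℝ => (((1 - t) ^ (-(1/2) : ℝ) : ℝ) : ℂ)) volume 0 1 := by
  have h := (intervalIntegral.intervalIntegrable_rpow' (a := 0) (b := 1)
    (r := (-(1/2) : ℝ)) (by norm_num)).comp_sub_left 1
  simp only [sub_zero, sub_self] at h
  rw [intervalIntegrable_iff] at h ⊢
  rw [Set.uIoc_comm] at h
  exact h.ofReal

lemma aux_ftc {z : ℂ} (hz : ∀ t ∈ Set.Icc (0:ℝ) 1, (1:ℂ) - z * (t:ℂ) ∈ Complex.slitPlane) :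
    ∫ t in (0:ℝ)..1, (((1 - t) ^ (-(1/2) : ℝ) : ℝ) : ℂ) *
      ((1/2) * ((1:ℂ) - z * (t:ℂ)) ^ (-(1/2) - 1 : ℂ)) = (1 - z)⁻¹ := by
  have hz1 : (1:ℂ) - z ≠ 0 := by
    have := Complex.slitPlane_ne_zero (hz 1 (by simp))
    simpa using this
  have hcont : ∀ a : ℂ, ContinuousOn (fun t : ℝ => ((1:ℂ) - z * (t:ℂ)) ^ a) (Set.Icc 0 1) := by
    intro a
    apply ContinuousOn.cpow_const
    · fun_prop
    · exact hz
  have hint : IntervalIntegrable (fun t : ℝ => (((1 - t) ^ (-(1/2) : ℝ) : ℝ) : ℂ) *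
      ((1/2) * ((1:ℂ) - z * (t:ℂ)) ^ (-(1/2) - 1 : ℂ))) volume 0 1 := by
    apply aux_w.mul_continuousOn
    rw [Set.uIcc_of_le zero_le_one]
    exact continuousOn_const.mul (hcont _)
  have h := intervalIntegral.integral_eq_sub_of_hasDerivAt_of_le zero_le_one
    (f := fun t : ℝ => (((1 - t) ^ (1/2 : ℝ) : ℝ) : ℂ) * ((1:ℂ) - z * (t:ℂ)) ^ (-(1/2) : ℂ) *
      (-(1 - z)⁻¹)) (f' := fun t : ℝ => (((1 - t) ^ (-(1/2) : ℝ) : ℝ) : ℂ) *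
      ((1/2) * ((1:ℂ) - z * (t:ℂ)) ^ (-(1/2) - 1 : ℂ))) ?_ ?_ hint
  · rw [h]
    simp
  · refine (ContinuousOn.mul ?_ (hcont _)).mul continuousOn_const
    apply Continuous.continuousOn
    apply Complex.continuous_ofReal.comp
    exact (continuous_const.sub continuous_id).rpow_const (fun x => Or.inr (by norm_num))
  · intro t ht
    have hpos : 0 < 1 - t := by linarith [ht.2]
    have hsl := hz t ⟨ht.1.le, ht.2.le⟩
    have h1 : HasDerivAt (fun t : ℝ => (1 - t) ^ (1/2 : ℝ))
        (-1 * (1/2 : ℝ) * (1 - t) ^ ((1/2 : ℝ) - 1)) t :=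
      HasDerivAt.rpow_const (by simpa using (hasDerivAt_id t).const_sub 1) (Or.inl hpos.ne')
    have h2 : HasDerivAt (fun q : ℂ => (1:ℂ) - z * q) (-z) (t:ℂ) := by
      simpa using ((hasDerivAt_id (t:ℂ)).const_mul z).const_sub 1
    have h3 := (h2.cpow_const (c := (-(1/2) : ℂ)) hsl).comp_ofReal
    have h4 := (h1.ofReal_comp.mul h3).mul_const (-(1 - z)⁻¹)
    refine h4.congr_deriv ?_
    have e1 : (1 - t) ^ (1/2 : ℝ) = (1 - t) * (1 - t) ^ (-(1/2) : ℝ) := by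
      rw [← Real.rpow_one_add' hpos.le (by norm_num)]; norm_num
    have e2 : ((1:ℂ) - z * (t:ℂ)) ^ (-(1/2) : ℂ) =
        (1 - z * t) * ((1:ℂ) - z * (t:ℂ)) ^ (-(1/2) - 1 : ℂ) := by
      rw [Complex.cpow_sub _ _ (Complex.slitPlane_ne_zero hsl), Complex.cpow_one,
        mul_div_cancel₀ _ (Complex.slitPlane_ne_zero hsl)]
    have e3 : (1/2 : ℝ) - 1 = -(1/2) := by norm_num
    rw [e3, e1, e2]
    push_cast
    field_simp
    ring

theorem Aop_of_sqrt_potential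
    (μ : ℝ → ℝ) (hμmeas : Measurable μ)
    (M : ℝ) (hμbdd : ∀ x ∈ Set.Icc (-1:ℝ) 1, |μ x| ≤ M)
    (Q : ℂ → ℂ)
    (hQ : ∀ p ∈ Omega,
        Q p = ∫ x in (-1:ℝ)..1, (μ x : ℂ) * ((1:ℂ) - p * (x:ℂ)) ^ (-(1/2) : ℂ)) :
    AnalyticOnNhd ℂ Q Omega ∧
    AnalyticOnNhd ℂ (Aop Q) Omega ∧
    ∀ p ∈ Omega,
      Aop Q p = ∫ x in (-1:ℝ)..1, (μ x : ℂ) * ((1:ℂ) - p * (x:ℂ))⁻¹ := by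
  have hle : (-1:ℝ) ≤ 1 := by norm_num
  set ν₁ : Measure ℝ := volume.restrict (Set.Ioc (-1:ℝ) 1) with hν₁
  set ν₂ : Measure ℝ := volume.restrict (Set.Ioc (0:ℝ) 1) with hν₂
  have hx : ∀ᵐ x ∂ν₁, x ∈ Set.Icc (-1:ℝ) 1 := by
    filter_upwards [ae_restrict_mem measurableSet_Ioc] with x hx
    exact Set.Ioc_subset_Icc_self hx
  have ht : ∀ᵐ x ∂ν₂, x ∈ Set.Icc (0:ℝ) 1 := by
    filter_upwards [ae_restrict_mem measurableSet_Ioc] with x hx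
    exact Set.Ioc_subset_Icc_self hx
  have hμi : Integrable (fun x => (μ x : ℂ)) ν₁ := by
    refine Integrable.of_bound (C := M) (Measurable.aestronglyMeasurable (by fun_prop)) ?_
    filter_upwards [hx] with x hx
    rw [Complex.norm_real]
    exact hμbdd x hx
  set w : ℝ → ℂ := fun t : ℝ => (((1 - t) ^ (-(1/2) : ℝ) : ℝ) : ℂ) with hw
  have hwi : Integrable w ν₂ := (intervalIntegrable_iff_integrableOn_Ioc_of_le zero_le_one).1 aux_w
  have hmi : Integrable (fun y : ℝ × ℝ => w y.1 * (μ y.2 : ℂ)) (ν₂.prod ν₁) := hwi.mul_prod hμi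
  have hs1 : ∀ᵐ y ∂(ν₂.prod ν₁), y.1 * y.2 ∈ Set.Icc (-1:ℝ) 1 := by
    have h1 := (Measure.quasiMeasurePreserving_fst (μ := ν₂) (ν := ν₁)).ae ht
    have h2 := (Measure.quasiMeasurePreserving_snd (μ := ν₂) (ν := ν₁)).ae hx
    filter_upwards [h1, h2] with y h1 h2
    constructor <;> nlinarith [h1.1, h1.2, h2.1, h2.2]
  have hsm : Measurable (fun y : ℝ × ℝ => y.1 * y.2) := by fun_prop
  have hQd : DifferentiableOn ℂ Q Omega := by
    intro p hp
    have h := aux_deriv ν₁ _ hμi (fun x => x) measurable_id hx (-(1/2)) hp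
    refine (h.differentiableAt.congr_of_eventuallyEq ?_).differentiableWithinAt
    filter_upwards [aux_open.mem_nhds hp] with q hq
    rw [hQ q hq, intervalIntegral.integral_of_le hle]
  have hG : ∀ p ∈ Omega, Gop Q p = ∫ y, (w y.1 * (μ y.2 : ℂ)) *
      ((1:ℂ) - p * ((y.1 * y.2 : ℝ) : ℂ)) ^ (-(1/2) : ℂ) ∂(ν₂.prod ν₁) := by
    intro p hp
    rw [integral_prod _ (aux_int _ _ hmi _ hsm hs1 _ hp)]
    unfold Gop
    rw [intervalIntegral.integral_of_le zero_le_one]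
    apply integral_congr_ae
    filter_upwards [ht] with t ht
    rw [hQ _ (aux_mul hp ht), intervalIntegral.integral_of_le hle, ← integral_mul_const]
    apply integral_congr_ae
    filter_upwards with x
    simp only [hw]
    push_cast
    rw [mul_assoc p]
    ring
  have hA : ∀ p ∈ Omega,
      Aop Q p = ∫ x in (-1:ℝ)..1, (μ x : ℂ) * ((1:ℂ) - p * (x:ℂ))⁻¹ := by
    intro p hp
    have hd := aux_deriv _ _ hmi _ hsm hs1 (-(1/2)) hp
    have hev : Gop Q =ᶠ[𝓝 p] fun q => ∫ y, (w y.1 * (μ y.2 : ℂ)) *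
        ((1:ℂ) - q * ((y.1 * y.2 : ℝ) : ℂ)) ^ (-(1/2) : ℂ) ∂(ν₂.prod ν₁) := by
      filter_upwards [aux_open.mem_nhds hp] with q hq
      exact hG q hq
    have hd' := (hd.congr_of_eventuallyEq hev).deriv
    have hI0 := aux_int _ _ hmi _ hsm hs1 (-(1/2)) hp
    have hI1 := aux_int _ _ hmi _ hsm hs1 (-(1/2) - 1) hp
    have hI : Integrable (fun y : ℝ × ℝ => (w y.1 * (μ y.2 : ℂ)) *
      ((1/2) * ((1:ℂ) - p * ((y.1 * y.2 : ℝ) : ℂ)) ^ (-(1/2) - 1 : ℂ))) (ν₂.prod ν₁) := by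
      refine (hI1.const_mul (1/2)).congr ?_
      filter_upwards with y
      ring
    have key : Aop Q p = ∫ y, (w y.1 * (μ y.2 : ℂ)) *
      ((1/2) * ((1:ℂ) - p * ((y.1 * y.2 : ℝ) : ℂ)) ^ (-(1/2) - 1 : ℂ)) ∂(ν₂.prod ν₁) := by
      have hpt : ∀ᵐ y ∂(ν₂.prod ν₁), p * ((w y.1 * (μ y.2 : ℂ)) * (-(1/2) *
          ((1:ℂ) - p * ((y.1 * y.2 : ℝ) : ℂ)) ^ (-(1/2) - 1 : ℂ) * (-((y.1 * y.2 : ℝ) : ℂ)))) =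
          (w y.1 * (μ y.2 : ℂ)) *
            ((1/2) * ((1:ℂ) - p * ((y.1 * y.2 : ℝ) : ℂ)) ^ (-(1/2) - 1 : ℂ)) -
          (w y.1 * (μ y.2 : ℂ)) *
            ((1:ℂ) - p * ((y.1 * y.2 : ℝ) : ℂ)) ^ (-(1/2) : ℂ) / 2 := by
        filter_upwards [hs1] with y hy
        have hne := Complex.slitPlane_ne_zero (aux_slit hp hy)
        have e2 : ((1:ℂ) - p * ((y.1 * y.2 : ℝ):ℂ)) ^ (-(1/2) : ℂ) =
            (1 - p * ((y.1 * y.2 : ℝ):ℂ)) * ((1:ℂ) - p * ((y.1 * y.2 : ℝ):ℂ)) ^ (-(1/2) - 1 : ℂ) := by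
          rw [Complex.cpow_sub _ _ hne, Complex.cpow_one, mul_div_cancel₀ _ hne]
        rw [e2]
        ring
      unfold Aop
      rw [hd', hG p hp, ← integral_const_mul, integral_congr_ae hpt,
        integral_sub hI (hI0.div_const 2), integral_div]
      ring
    rw [key, integral_prod_symm _ hI, intervalIntegral.integral_of_le hle]
    apply integral_congr_ae
    filter_upwards [hx] with x hx
    rw [← aux_ftc (z := p * (x:ℂ)), intervalIntegral.integral_of_le zero_le_one,
      ← integral_const_mul]
    · apply integral_congr_ae
      filter_upwards with t
      simp only [hw]
      push_cast
      rw [mul_comm (t:ℂ) (x:ℂ), mul_assoc p]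
      ring
    · intro t ht
      have := aux_slit hp (s := x * t)
        (by constructor <;> nlinarith [hx.1, hx.2, ht.1, ht.2])
      push_cast at this
      rwa [mul_assoc]
  refine ⟨hQd.analyticOnNhd aux_open, DifferentiableOn.analyticOnNhd ?_ aux_open, hA⟩
  intro p hp
  have h := aux_deriv ν₁ _ hμi (fun x => x) measurable_id hx (-1) hp
  refine (h.differentiableAt.congr_of_eventuallyEq ?_).differentiableWithinAt
  filter_upwards [aux_open.mem_nhds hp] with q hq
  rw [hA q hq, intervalIntegral.integral_of_le hle]
  simp only [Complex.cpow_neg_one, hν₁]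
end

section
/- Let β > 1 be a non-integer real number, ε > 0, m an integer with m > β, and let P be a real polynomial with P(0) = 1 and P^{(j)}(ε) = 0 for j = 0, 1, …, m. Then lim_{k→+∞} k^β ∫_0^ε e^{−ikx} x^{β−1} P(x) dx = e^{−iπβ/2} Γ(β). -/
open MeasureTheory Filter Topology

namespace OscAux

open Complex

/-- Cauchy on the rectangle `[0, ε] × [-1, 0]`. -/
lemma contour (F : ℂ → ℂ) (ε : ℝ) (hε : 0 < ε) (hc : ContinuousOn F {z | 0 ≤ z.re})
    (hd : DifferentiableOn ℂ F {z | 0 < z.re}) :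
    ∫ x in (0:ℝ)..ε, F x = (∫ x in (0:ℝ)..ε, F (x - I)) + I * (∫ t in (0:ℝ)..1, F (ε - t * I))
      - I * ∫ t in (0:ℝ)..1, F (-(t * I)) := by
  have h := Complex.integral_boundary_rect_eq_zero_of_continuousOn_of_differentiableOn F 0
    ((ε:ℂ) - I) (hc.mono ?_) (hd.mono ?_)
  · have e1 : ∀ G : ℝ → ℂ, ∫ y in (0:ℝ)..(-1), G y = - ∫ t in (0:ℝ)..1, G (-t) := by
      intro G
      rw [intervalIntegral.integral_comp_neg, neg_zero, intervalIntegral.integral_symm]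
    simp only [sub_re, ofReal_re, I_re, sub_zero, zero_re, zero_im, sub_im, ofReal_im, I_im,
      zero_sub, ofReal_zero, zero_mul, add_zero, e1, ofReal_neg, ofReal_one, smul_eq_mul,
      zero_add, neg_mul, one_mul, ← sub_eq_add_neg] at h
    linear_combination h
  · intro z hz
    have := hz.1
    simp only [Set.mem_preimage, zero_re, sub_re, ofReal_re, I_re, sub_zero,
      Set.uIcc_of_le hε.le] at this
    exact this.1
  · intro z hz
    have := hz.1
    simp only [Set.mem_preimage, zero_re, sub_re, ofReal_re, I_re, sub_zero,
      min_eq_left hε.le] at this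
    exact this.1

/-- The bottom edge. -/
lemma bottom (g : ℂ → ℂ) (β ε : ℝ) (hε : 0 < ε) (hc : ContinuousOn g {z | 0 ≤ z.re}) :
    Tendsto (fun k : ℝ => ((k ^ β : ℝ) : ℂ) *
      ∫ x in (0:ℝ)..ε, exp (-I * k * (x - I)) * g (x - I)) atTop (𝓝 0) := by
  have hcc : ContinuousOn (fun x : ℝ => g (x - I)) (Set.Icc 0 ε) := by
    refine hc.comp (by fun_prop) ?_
    intro x hx
    simpa using hx.1
  obtain ⟨C, hC⟩ := isCompact_Icc.exists_bound_of_continuousOn hcc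
  have ht := (tendsto_rpow_mul_exp_neg_mul_atTop_nhds_zero β 1 one_pos).mul_const (C * |ε - 0|)
  rw [zero_mul] at ht
  refine squeeze_zero_norm' ?_ ht
  filter_upwards [eventually_gt_atTop 0] with k hk
  have hb : ‖∫ x in (0:ℝ)..ε, exp (-I * k * (x - I)) * g (x - I)‖
      ≤ (Real.exp (-1 * k) * C) * |ε - 0| := by
    refine intervalIntegral.norm_integral_le_of_norm_le_const ?_
    intro x hx
    rw [Set.uIoc_of_le hε.le] at hx
    rw [norm_mul, norm_exp]
    have : (-I * k * (x - I)).re = -1 * k := by simp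
    rw [this]
    gcongr
    exact hC x ⟨hx.1.le, hx.2⟩
  rw [norm_mul, norm_real, Real.norm_of_nonneg (Real.rpow_nonneg hk.le _)]
  calc _ ≤ k ^ β * ((Real.exp (-1 * k) * C) * |ε - 0|) := by gcongr
    _ = _ := by ring

/-- The right edge. -/
lemma right (h : ℝ → ℂ) (β ε C : ℝ) (m : ℕ) (hm : β < m)
    (hC : ∀ t ∈ Set.Ioc (0:ℝ) 1, ‖h t‖ ≤ C * t ^ m) (hC0 : 0 ≤ C) :
    Tendsto (fun k : ℝ => ((k ^ β : ℝ) : ℂ) *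
      ∫ t in (0:ℝ)..1, exp (-I * k * (ε - t * I)) * h t) atTop (𝓝 0) := by
  have ht := (tendsto_rpow_neg_atTop (sub_pos.2 hm)).mul_const (C * m.factorial * |(1:ℝ) - 0|)
  rw [zero_mul] at ht
  refine squeeze_zero_norm' ?_ ht
  filter_upwards [eventually_gt_atTop 0] with k hk
  have hkm : (0:ℝ) < k ^ m := by positivity
  have hb : ‖∫ t in (0:ℝ)..1, exp (-I * k * (ε - t * I)) * h t‖
      ≤ (C * m.factorial / k ^ m) * |(1:ℝ) - 0| := by
    refine intervalIntegral.norm_integral_le_of_norm_le_const ?_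
    intro t ht
    rw [Set.uIoc_of_le zero_le_one] at ht
    rw [norm_mul, norm_exp]
    have : (-I * k * (ε - t * I)).re = -(k * t) := by simp
    rw [this]
    have h1 := Real.pow_div_factorial_le_exp (x := k * t) (mul_nonneg hk.le ht.1.le) m
    have hf : (0:ℝ) < m.factorial := by positivity
    rw [div_le_iff₀ hf] at h1
    have h2 : Real.exp (-(k * t)) * t ^ m ≤ m.factorial / k ^ m := by
      rw [le_div_iff₀ hkm, Real.exp_neg, inv_mul_eq_div, div_mul_eq_mul_div,
        div_le_iff₀ (Real.exp_pos _)]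
      calc t ^ m * k ^ m = (k * t) ^ m := by rw [mul_pow]; ring
        _ ≤ _ := h1
        _ = _ := by ring
    calc _ ≤ Real.exp (-(k * t)) * (C * t ^ m) := by gcongr; exact hC t ht
      _ = C * (Real.exp (-(k * t)) * t ^ m) := by ring
      _ ≤ C * (m.factorial / k ^ m) := by gcongr
      _ = _ := by ring
  rw [norm_mul, norm_real, Real.norm_of_nonneg (Real.rpow_nonneg hk.le _)]
  have e : k ^ (-((m:ℝ) - β)) = k ^ β / k ^ m := by
    rw [neg_sub, Real.rpow_sub hk, Real.rpow_natCast]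
  rw [e]
  calc _ ≤ k ^ β * ((C * m.factorial / k ^ m) * |(1:ℝ) - 0|) := by gcongr
    _ = _ := by ring

/-- The left edge. -/
lemma left (q : ℝ → ℂ) (hq : Continuous q) (β : ℝ) (hβ : 0 < β) :
    Tendsto (fun k : ℝ => ((k ^ β : ℝ) : ℂ) *
      ∫ t in (0:ℝ)..1, ((Real.exp (-(k * t)) * t ^ (β - 1) : ℝ) : ℂ) * q t) atTop
      (𝓝 ((Real.Gamma β : ℝ) * q 0)) := by
  obtain ⟨C, hC⟩ := (isCompact_Icc (a := (0:ℝ)) (b := 1)).exists_bound_of_continuousOn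
    hq.continuousOn
  have hC0 : 0 ≤ C := (norm_nonneg _).trans (hC 0 ⟨le_rfl, zero_le_one⟩)
  have key : Tendsto (fun k : ℝ => ∫ s in Set.Ioi (0:ℝ), (Set.Iic k).indicator
      (fun s => ((Real.exp (-s) * s ^ (β - 1) : ℝ) : ℂ) * q (s / k)) s) atTop
      (𝓝 (∫ s in Set.Ioi (0:ℝ), ((Real.exp (-s) * s ^ (β - 1) : ℝ) : ℂ) * q 0)) := by
    refine tendsto_integral_filter_of_dominated_convergence
      (fun s => (Real.exp (-s) * s ^ (β - 1)) * C) ?_ ?_ ?_ ?_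
    · refine Eventually.of_forall fun k => ?_
      refine (Measurable.indicator ?_ measurableSet_Iic).aestronglyMeasurable
      refine Measurable.mul ?_ (hq.measurable.comp (by fun_prop))
      exact measurable_ofReal.comp (by fun_prop)
    · filter_upwards [eventually_gt_atTop 0] with k hk
      refine (ae_restrict_iff' measurableSet_Ioi).2 (Eventually.of_forall fun s hs => ?_)
      have hs : 0 < s := hs
      by_cases hsk : s ∈ Set.Iic k
      · rw [Set.indicator_of_mem hsk, norm_mul, norm_real, Real.norm_of_nonneg (by positivity)]
        gcongr
        exact hC _ ⟨by positivity, (div_le_one hk).2 hsk⟩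
      · rw [Set.indicator_of_notMem hsk, norm_zero]
        positivity
    · exact (Real.GammaIntegral_convergent hβ).mul_const C
    · refine (ae_restrict_iff' measurableSet_Ioi).2 (Eventually.of_forall fun s hs => ?_)
      have : Tendsto (fun k : ℝ => ((Real.exp (-s) * s ^ (β - 1) : ℝ) : ℂ) * q (s / k)) atTop
          (𝓝 (((Real.exp (-s) * s ^ (β - 1) : ℝ) : ℂ) * q 0)) :=
        (((hq.tendsto 0).comp (tendsto_const_nhds.div_atTop tendsto_id))).const_mul _
      refine this.congr' ?_
      filter_upwards [eventually_ge_atTop s] with k hk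
      rw [Set.indicator_of_mem (show s ∈ Set.Iic k from hk)]
  rw [integral_mul_const, integral_complex_ofReal, ← Real.Gamma_eq_integral hβ] at key
  refine key.congr' ?_
  filter_upwards [eventually_gt_atTop 0] with k hk
  rw [setIntegral_indicator measurableSet_Iic, Set.Ioi_inter_Iic,
    ← intervalIntegral.integral_of_le hk.le]
  have h := intervalIntegral.smul_integral_comp_mul_left (a := 0) (b := 1)
    (fun s => ((Real.exp (-s) * s ^ (β - 1) : ℝ) : ℂ) * q (s / k)) k
  rw [mul_zero, mul_one] at h
  rw [← h, real_smul, ← intervalIntegral.integral_const_mul, ← intervalIntegral.integral_const_mul]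
  refine intervalIntegral.integral_congr fun t ht => ?_
  rw [Set.uIcc_of_le zero_le_one] at ht
  have e : k ^ β = k * k ^ (β - 1) := by
    rw [Real.rpow_sub_one hk.ne']; field_simp
  rw [mul_div_cancel_left₀ _ hk.ne', Real.mul_rpow hk.le ht.1, e]
  push_cast
  ring

lemma cpow_neg_I (β t : ℝ) (hβ : 1 < β) (ht : 0 ≤ t) :
    -I * (-(t * I)) ^ ((β:ℂ) - 1) =
      exp (-I * (Real.pi : ℂ) * (β : ℂ) / 2) * ((t ^ (β - 1) : ℝ) : ℂ) := by
  have hb : (β:ℂ) - 1 ≠ 0 := by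
    rw [sub_ne_zero]; exact_mod_cast hβ.ne'
  rcases ht.eq_or_lt with rfl | ht
  · simp [zero_cpow hb, Real.zero_rpow (sub_pos.2 hβ).ne']
  · have hI : -I ≠ 0 := neg_ne_zero.2 I_ne_zero
    have h0 : (t:ℂ) ≠ 0 := by exact_mod_cast ht.ne'
    have e : -((t:ℂ) * I) = t * (-I) := by ring
    rw [e, cpow_def_of_ne_zero (mul_ne_zero h0 hI), log_ofReal_mul ht hI, add_mul, exp_add,
      ofReal_cpow ht.le, cpow_def_of_ne_zero h0, ofReal_log ht.le, log_neg_I]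
    have e2 : -I = exp (-(Real.pi / 2) * I) := by
      rw [← log_neg_I, exp_log hI]
    have e3 : exp (-I * (Real.pi : ℂ) * (β : ℂ) / 2) =
        exp (-(Real.pi / 2) * I) * exp (-(Real.pi / 2) * I * (β - 1)) := by
      rw [← exp_add]; congr 1; ring
    rw [e3, ← e2]
    push_cast
    ring

end OscAux

/-- for non-integer `β > 1` and a polynomial `P` with `P(0) = 1` and
`P^{(j)}(ε) = 0` for `j = 0, …, m` (`m > β`),
`k^β ∫_0^ε e^{−ikx} x^{β−1} P(x) dx → e^{−iπβ/2} Γ(β)` as `k → ∞`. -/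
theorem oscillatory_integral_asymptotics
    (β ε : ℝ) (hβ : 1 < β) (hβnotint : ∀ n : ℤ, β ≠ (n : ℝ)) (hε : 0 < ε)
    (m : ℕ) (hm : β < (m : ℝ))
    (P : Polynomial ℝ) (hP0 : P.eval 0 = 1)
    (hPder : ∀ j : ℕ, j ≤ m → ((⇑Polynomial.derivative)^[j] P).eval ε = 0) :
    Tendsto (fun k : ℝ => ((k ^ β : ℝ) : ℂ) *
        ∫ x in (0:ℝ)..ε,
          Complex.exp (-Complex.I * (k:ℂ) * (x:ℂ)) * ((x ^ (β-1) : ℝ) : ℂ) * ((P.eval x : ℝ) : ℂ))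
      atTop
      (𝓝 (Complex.exp (-Complex.I * (Real.pi : ℂ) * (β : ℂ) / 2) * ((Real.Gamma β : ℝ) : ℂ))) := by
  set Q : Polynomial ℂ := P.map (algebraMap ℝ ℂ) with hQ
  have hQev : ∀ x : ℝ, Q.eval (x:ℂ) = ((P.eval x : ℝ) : ℂ) := by
    intro x
    exact (Polynomial.eval_map_algebraMap P (x:ℂ)).trans
      (Polynomial.aeval_algebraMap_apply_eq_algebraMap_eval x P)
  have hβ1 : 0 < ((β:ℂ) - 1).re := by simpa using hβ
  set g : ℂ → ℂ := fun z => z ^ ((β:ℂ) - 1) * Q.eval z with hg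
  have hgc : ContinuousOn g {z | 0 ≤ z.re} := by
    refine ContinuousOn.mul (fun z hz => ?_) Q.continuous.continuousOn
    exact (Complex.continuousAt_cpow_const_of_re_pos (Or.inl hz) hβ1).continuousWithinAt
  have hgd : DifferentiableOn ℂ g {z | 0 < z.re} := by
    refine DifferentiableOn.mul (fun z hz => ?_) Q.differentiable.differentiableOn
    exact (differentiableAt_id.cpow_const (Or.inl hz)).differentiableWithinAt
  -- the bound on the right edge
  have hP : P ≠ 0 := by
    rintro rfl
    simp at hP0
  have hdvd : (Polynomial.X - Polynomial.C ε) ^ m ∣ P := by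
    rw [← Polynomial.le_rootMultiplicity_iff hP]
    exact (Polynomial.lt_rootMultiplicity_of_isRoot_iterate_derivative hP hPder).le
  obtain ⟨R, hR⟩ := hdvd
  have hQR : ∀ z : ℂ, Q.eval z = (z - ε) ^ m * (R.map (algebraMap ℝ ℂ)).eval z := by
    intro z
    rw [hQ, hR]
    simp
  obtain ⟨C, hC0, hC⟩ : ∃ C : ℝ, 0 ≤ C ∧ ∀ t ∈ Set.Ioc (0:ℝ) 1,
      ‖g (ε - t * Complex.I)‖ ≤ C * t ^ m := by
    have hcc : ContinuousOn (fun t : ℝ => (ε - t * Complex.I) ^ ((β:ℂ) - 1) *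
        (R.map (algebraMap ℝ ℂ)).eval (ε - t * Complex.I)) (Set.Icc 0 1) := by
      refine ContinuousOn.mul (fun t ht => ?_) ?_
      · refine ContinuousAt.continuousWithinAt ?_
        refine ContinuousAt.comp (f := fun t : ℝ => (ε:ℂ) - t * Complex.I)
          (g := fun z : ℂ => z ^ ((β:ℂ) - 1))
          (Complex.continuousAt_cpow_const_of_re_pos (Or.inl (by simpa using hε.le)) hβ1)
          (by fun_prop)
      · exact ((R.map (algebraMap ℝ ℂ)).continuous.comp (by fun_prop)).continuousOn
    obtain ⟨C, hC⟩ := isCompact_Icc.exists_bound_of_continuousOn hcc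
    refine ⟨C, (norm_nonneg _).trans (hC 0 ⟨le_rfl, zero_le_one⟩), fun t ht => ?_⟩
    have e : g (ε - t * Complex.I) = ((ε - t * Complex.I) ^ ((β:ℂ) - 1) *
        (R.map (algebraMap ℝ ℂ)).eval (ε - t * Complex.I)) * (-(t * Complex.I)) ^ m := by
      simp only [hg, hQR]
      ring
    rw [e, norm_mul]
    have e2 : ‖(-(t * Complex.I)) ^ m‖ = t ^ m := by
      simp [abs_of_pos ht.1]
    rw [e2]
    exact mul_le_mul_of_nonneg_right (hC t ⟨ht.1.le, ht.2⟩) (pow_nonneg ht.1.le _)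
  have T1 := OscAux.bottom g β ε hε hgc
  have T2 := OscAux.right (fun t => g (ε - t * Complex.I)) β ε C m hm hC hC0
  have T3 := OscAux.left (fun t => Q.eval (-(t * Complex.I))) (Q.continuous.comp (by fun_prop))
    β (by linarith)
  have hQ0 : Q.eval 0 = 1 := by
    have := hQev 0
    simpa [hP0] using this
  have T := (T1.add (T2.const_mul Complex.I)).add
    (T3.const_mul (Complex.exp (-Complex.I * (Real.pi : ℂ) * (β : ℂ) / 2)))
  simp only [mul_zero, zero_add, Complex.ofReal_zero, zero_mul, neg_zero, hQ0, mul_one] at T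
  refine T.congr fun k => ?_
  have hF := OscAux.contour (fun z => Complex.exp (-Complex.I * k * z) * g z) ε hε
    (ContinuousOn.mul (by fun_prop) hgc) (DifferentiableOn.mul (by fun_prop) hgd)
  have hL : ∫ x in (0:ℝ)..ε,
      Complex.exp (-Complex.I * (k:ℂ) * (x:ℂ)) * ((x ^ (β-1) : ℝ) : ℂ) * ((P.eval x : ℝ) : ℂ)
      = ∫ x in (0:ℝ)..ε, Complex.exp (-Complex.I * k * x) * g x := by
    refine intervalIntegral.integral_congr fun x hx => ?_
    rw [Set.uIcc_of_le hε.le] at hx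
    simp only [hg]
    rw [hQev, Complex.ofReal_cpow hx.1]
    push_cast
    ring
  have hM : Complex.exp (-Complex.I * (Real.pi : ℂ) * (β : ℂ) / 2) *
      (∫ t in (0:ℝ)..1, ((Real.exp (-(k * t)) * t ^ (β - 1) : ℝ) : ℂ) *
        Q.eval (-(t * Complex.I))) = -Complex.I * ∫ t in (0:ℝ)..1,
        Complex.exp (-Complex.I * k * (-(t * Complex.I))) * g (-(t * Complex.I)) := by
    rw [← intervalIntegral.integral_const_mul, ← intervalIntegral.integral_const_mul]
    refine intervalIntegral.integral_congr fun t ht => ?_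
    rw [Set.uIcc_of_le zero_le_one] at ht
    have e := OscAux.cpow_neg_I β t hβ ht.1
    have e2 : -Complex.I * k * (-(t * Complex.I)) = -(k * t) := by
      linear_combination (k * t : ℂ) * Complex.I_mul_I
    simp only [hg]
    rw [e2]
    push_cast at e ⊢
    linear_combination (-Complex.exp (-(k * t)) * Q.eval (-(t * Complex.I))) * e
  rw [hL, hF]
  linear_combination ((k ^ β : ℝ) : ℂ) * hM
end
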